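/- In the partition setting under Assumptions (D) and (M) with α < 1, for all 1 ≤ j < k ≤ n, every bounded measurable f and every i ∈ I_j: (a) ‖q̂_{j,k}(f)‖_{j,i,2}² ≤ M_{j,k}(i)²·( α^{k−j}·max_{l∈s_k(i)} ‖f‖_{k,l,2}² + (β/(1−α))·max_{l∈s_k(i)} μ_{k,l}(f)² ); (b) ‖q̂_{j,k}(f)‖_{j,i,2} ≤ M_{j,k}(i)·(1−α)^{−1/2}·max_{l∈s_k(i)} ‖f‖_{k,l,2}; and (c) ‖q̂_{j,k}(f)‖_{j,2} ≤ A_{j,k}·(1−α)^{−1/2}·‖f‖_{k,2}. -/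

import Mathlib

/-! Write `h = q̂_{j+1,k}(f)`, so that `q̂_{j,k}(f) = q̂_{j,j+1}(h)`, and apply the one-step mixing
bound to `h`. Its two terms are controlled as follows.

* The squared local norm of `h` on a level-`j` cell is a convex combination of its squared local
  norms on the level-`j+1` cells inside it, to which the bound for `j+1` applies.
* By (D) and invariance, the propagators preserve integrals over cells of coarser levels
  (`setIntegral_qhat`): `μ_{j+1}(h·1_{F_i}) = μ_k(f·1_{F_i})`. Hence the mean of `h` on `F_i` is
  `μ_k(F_i)/μ_{j+1}(F_i)` times the mean of `f`, and the mass quotient is bounded by the maximal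
  product of one-step mass ratios along a branch, again by convexity.

Downward induction on `j` (`key_bound`) yields the bound with the *finite* geometric sum
`∑_{r<k-j} α^r` in place of `1/(1-α)`. Bounding this sum by `1/(1-α)` gives the first claim. The
second one needs the finite sum: `α^{k-j} + β ∑_{r<k-j} α^r ≤ ∑_{r≤k-j} α^r ≤ 1/(1-α)`, whereas
`α^{k-j} + β/(1-α)` may exceed `1/(1-α)`. -/

open MeasureTheory

variable {E : Type} [MeasurableSpace E]
variable {I : ℕ → Type} [∀ k, Fintype (I k)] [∀ k, Nonempty (I k)] [∀ k, DecidableEq (I k)]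

/-- The restricted (normalized) measure μ_{k,j}: the restriction of `μ` to the
partition element `S`, normalized to a probability measure. -/
noncomputable def muLoc (μ : Measure E) (S : Set E) : Measure E := (μ S)⁻¹ • μ.restrict S

/-- The local L_p-norm ‖f‖_{k,j,p} = μ_{k,j}(|f|^p)^{1/p}. -/
noncomputable def locNorm (ν : Measure E) (p : ℝ) (f : E → ℝ) : ℝ :=
  (∫ x, |f x| ^ p ∂ν) ^ (1/p)

/-- The norm ‖f‖_{k,p} = max_{j ∈ I_k} ‖f‖_{k,j,p}. -/
noncomputable def maxNorm (μ : ℕ → Measure E) (F : ∀ k, I k → Set E) (k : ℕ) (p : ℝ)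
    (f : E → ℝ) : ℝ :=
  Finset.univ.sup' Finset.univ_nonempty fun j : I k => locNorm (muLoc (μ k) (F k j)) p f

/-- The relative mass change m_{k,k+1}(j) = μ_{k+1}(F_j)/μ_k(F_j). -/
noncomputable def mRatio (μ : ℕ → Measure E) (F : ∀ k, I k → Set E) (k : ℕ) (j : I k) : ℝ :=
  (μ (k+1) (F k j)).toReal / (μ k (F k j)).toReal

/-- The successor set s_k(i) = {l ∈ I_k | p_j(l) = i} of i ∈ I_j. -/
def succSet (p : ∀ j k : ℕ, I k → I j) (j k : ℕ) (i : I j) : Finset (I k) :=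
  Finset.univ.filter fun l => p j k l = i

/-- The product Π_{r=j}^{k-1} m_{r,r+1}(p_r(l)) of relative mass changes along
the branch leading to l ∈ I_k; its maximum over l ∈ s_k(i) is M_{j,k}(i). -/
noncomputable def Mprod (μ : ℕ → Measure E) (F : ∀ k, I k → Set E) (p : ∀ j k : ℕ, I k → I j)
    (j k : ℕ) (l : I k) : ℝ :=
  ∏ r ∈ Finset.Ico j k, mRatio μ F r (p r k l)

/-- The propagator q_{j,k}(f) = ḡ_{j,j+1}·q̂_{j+1,k}(K_k(f)). -/
noncomputable def qFull (μ : ℕ → Measure E) (g : ℕ → E → ℝ) (K : ℕ → E → Measure E)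
    (qhat : ℕ → ℕ → (E → ℝ) → E → ℝ) (j k : ℕ) (f : E → ℝ) : E → ℝ :=
  fun x => (g j x / (∫ z, g j z ∂(μ j))) * qhat (j+1) k (fun y => ∫ z, f z ∂(K k y)) x

/-- The constant δ(2^r) = Π_{t=1}^{r} γ^{1-2^{-(t-1)}}/(1-α·γ^{2^t-2})^{2^{-t}}. -/
noncomputable def deltaP (α γ : ℝ) (r : ℕ) : ℝ :=
  ∏ t ∈ Finset.Icc 1 r,
    γ ^ (1 - (2:ℝ) ^ (1 - (t:ℝ))) / (1 - α * γ ^ ((2:ℝ) ^ t - 2)) ^ ((2:ℝ) ^ (-(t:ℝ)))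

set_option linter.unusedSectionVars false

/-! ### Local norms and averages -/

lemma locNorm_nonneg (ν : Measure E) (f : E → ℝ) : 0 ≤ locNorm ν 2 f := by
  unfold locNorm
  exact Real.rpow_nonneg (integral_nonneg fun x => Real.rpow_nonneg (abs_nonneg _) _) _

lemma locNorm_sq (ν : Measure E) (f : E → ℝ) : (locNorm ν 2 f) ^ 2 = ∫ x, (f x) ^ 2 ∂ν := by
  have h : (∫ x, |f x| ^ (2 : ℝ) ∂ν) = ∫ x, (f x) ^ 2 ∂ν := by
    congr 1; ext x; rw [Real.rpow_two, sq_abs]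
  unfold locNorm
  rw [h, ← Real.sqrt_eq_rpow, Real.sq_sqrt]
  exact integral_nonneg fun x => sq_nonneg _

lemma integral_muLoc (ν : Measure E) (S : Set E) (f : E → ℝ) :
    ∫ x, f x ∂(muLoc ν S) = (∫ x in S, f x ∂ν) / ν.real S := by
  unfold muLoc
  rw [integral_smul_measure, ENNReal.toReal_inv, smul_eq_mul, div_eq_inv_mul]
  rfl

lemma integrable_of_bdd (ν : Measure E) [IsFiniteMeasure ν] {f : E → ℝ} (hf : Measurable f)
    (hb : ∃ C : ℝ, ∀ x, |f x| ≤ C) : Integrable f ν := by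
  obtain ⟨C, hC⟩ := hb
  exact Integrable.of_bound hf.aestronglyMeasurable C (Filter.Eventually.of_forall hC)

lemma sq_bdd {f : E → ℝ} (hb : ∃ C : ℝ, ∀ x, |f x| ≤ C) : ∃ C : ℝ, ∀ x, |f x ^ 2| ≤ C := by
  obtain ⟨C, hC⟩ := hb
  refine ⟨C ^ 2, fun x => ?_⟩
  rw [abs_pow]
  exact pow_le_pow_left₀ (abs_nonneg _) (hC x) 2

/-- Jensen's inequality `μ_{k,j}(f)² ≤ ‖f‖_{k,j,2}²`, in square-root form. -/
lemma abs_integral_muLoc_le (ν : Measure E) [IsProbabilityMeasure ν] {S : Set E} (hS : ν S ≠ 0)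
    {f : E → ℝ} (hf : Measurable f) (hb : ∃ C : ℝ, ∀ x, |f x| ≤ C) :
    |∫ x, f x ∂(muLoc ν S)| ≤ locNorm (muLoc ν S) 2 f := by
  have hprob : IsProbabilityMeasure (muLoc ν S) := by
    constructor
    simp only [muLoc, Measure.smul_apply, Measure.restrict_apply MeasurableSet.univ,
      Set.univ_inter, smul_eq_mul]
    exact ENNReal.inv_mul_cancel hS (measure_ne_top _ _)
  refine abs_le_of_sq_le_sq ?_ (locNorm_nonneg _ _)
  rw [locNorm_sq]
  have hi := integrable_of_bdd (muLoc ν S) hf hb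
  have hi2 := integrable_of_bdd (muLoc ν S) (hf.pow_const 2) (sq_bdd hb)
  set a := ∫ x, f x ∂(muLoc ν S) with ha
  have h0 : 0 ≤ ∫ x, (f x - a) ^ 2 ∂(muLoc ν S) := integral_nonneg fun x => sq_nonneg _
  have h1 : ∫ x, (f x - a) ^ 2 ∂(muLoc ν S) = (∫ x, (f x) ^ 2 ∂(muLoc ν S)) - a ^ 2 := by
    have : ∀ x, (f x - a) ^ 2 = (f x ^ 2 - 2 * a * f x) + a ^ 2 := fun x => by ring
    simp_rw [this]
    have hi3 : Integrable (fun x => 2 * a * f x) (muLoc ν S) := hi.const_mul _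
    have hi4 : Integrable (fun x => f x ^ 2 - 2 * a * f x) (muLoc ν S) := hi2.sub hi3
    rw [integral_add hi4 (integrable_const _), integral_sub hi2 hi3, integral_const_mul]
    simp only [integral_const, probReal_univ, smul_eq_mul]
    rw [← ha]; ring
  linarith

/-! ### Refining partitions -/

section cells
variable {n : ℕ} {F : ∀ k, I k → Set E}

open Classical in
/-- The cells of level `r` contained in the cell `i` of level `j`. -/
noncomputable def subCells (F : ∀ k, I k → Set E) (j r : ℕ) (i : I j) : Finset (I r) :=
  Finset.univ.filter fun l => F r l ⊆ F j i

lemma mem_subCells {j r : ℕ} {i : I j} {l : I r} : l ∈ subCells F j r i ↔ F r l ⊆ F j i := by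
  simp [subCells]

lemma cell_eq_biUnion
    (hFdisj : ∀ k, k ≤ n → ∀ j j' : I k, j ≠ j' → Disjoint (F k j) (F k j'))
    (hFcover : ∀ k, k ≤ n → (⋃ j : I k, F k j) = Set.univ)
    (href : ∀ j r, j ≤ r → r ≤ n → ∀ l : I r, ∃ i : I j, F r l ⊆ F j i)
    {j r : ℕ} (hjr : j ≤ r) (hr : r ≤ n) (i : I j) :
    F j i = ⋃ l ∈ subCells F j r i, F r l := by
  ext x
  simp only [Set.mem_iUnion, exists_prop, mem_subCells]
  constructor
  · intro hx
    have hx' : x ∈ ⋃ l : I r, F r l := by rw [hFcover r hr]; trivial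
    obtain ⟨l, hl⟩ := Set.mem_iUnion.1 hx'
    obtain ⟨i', hi'⟩ := href j r hjr hr l
    have : i' = i := by
      by_contra hne
      exact Set.disjoint_left.1 (hFdisj j (hjr.trans hr) i' i hne) (hi' hl) hx
    exact ⟨l, this ▸ hi', hl⟩
  · rintro ⟨l, hl, hx⟩
    exact hl hx

lemma setIntegral_cell
    (hFmeas : ∀ k j, MeasurableSet (F k j))
    (hFdisj : ∀ k, k ≤ n → ∀ j j' : I k, j ≠ j' → Disjoint (F k j) (F k j'))
    (hFcover : ∀ k, k ≤ n → (⋃ j : I k, F k j) = Set.univ)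
    (href : ∀ j r, j ≤ r → r ≤ n → ∀ l : I r, ∃ i : I j, F r l ⊆ F j i)
    {j r : ℕ} (hjr : j ≤ r) (hr : r ≤ n) (i : I j) (ν : Measure E) {f : E → ℝ}
    (hf : Integrable f ν) :
    ∫ x in F j i, f x ∂ν = ∑ l ∈ subCells F j r i, ∫ x in F r l, f x ∂ν := by
  rw [cell_eq_biUnion hFdisj hFcover href hjr hr i]
  refine integral_biUnion_finset _ (fun l _ => hFmeas r l) ?_ (fun l _ => hf.integrableOn)
  intro a _ b _ hab
  exact hFdisj r hr a b hab

lemma real_cell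
    (hFmeas : ∀ k j, MeasurableSet (F k j))
    (hFdisj : ∀ k, k ≤ n → ∀ j j' : I k, j ≠ j' → Disjoint (F k j) (F k j'))
    (hFcover : ∀ k, k ≤ n → (⋃ j : I k, F k j) = Set.univ)
    (href : ∀ j r, j ≤ r → r ≤ n → ∀ l : I r, ∃ i : I j, F r l ⊆ F j i)
    {j r : ℕ} (hjr : j ≤ r) (hr : r ≤ n) (i : I j) (ν : Measure E) [IsFiniteMeasure ν] :
    ν.real (F j i) = ∑ l ∈ subCells F j r i, ν.real (F r l) := by
  have := setIntegral_cell hFmeas hFdisj hFcover href hjr hr i ν (integrable_const (1 : ℝ))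
  simpa using this

/-- Averages over a cell are convex combinations of averages over its sub-cells. -/
lemma setIntegral_cell_le
    (hFmeas : ∀ k j, MeasurableSet (F k j))
    (hFdisj : ∀ k, k ≤ n → ∀ j j' : I k, j ≠ j' → Disjoint (F k j) (F k j'))
    (hFcover : ∀ k, k ≤ n → (⋃ j : I k, F k j) = Set.univ)
    (href : ∀ j r, j ≤ r → r ≤ n → ∀ l : I r, ∃ i : I j, F r l ⊆ F j i)
    {j r : ℕ} (hjr : j ≤ r) (hr : r ≤ n) (i : I j) (ν : Measure E) [IsFiniteMeasure ν]
    (hpos : ∀ l : I r, 0 < ν.real (F r l)) {f : E → ℝ}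
    (hf : Integrable f ν) {c : ℝ}
    (hc : ∀ l, F r l ⊆ F j i → ∫ x, f x ∂(muLoc ν (F r l)) ≤ c) :
    ∫ x in F j i, f x ∂ν ≤ c * ν.real (F j i) := by
  rw [setIntegral_cell hFmeas hFdisj hFcover href hjr hr i ν hf,
    real_cell hFmeas hFdisj hFcover href hjr hr i ν, Finset.mul_sum]
  refine Finset.sum_le_sum fun l hl => ?_
  have := hc l (mem_subCells.1 hl)
  rwa [integral_muLoc, div_le_iff₀ (hpos l)] at this

/-- Property (D) is inherited by cells of coarser levels, for both the cell and its complement: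
the kernel of level `r` never crosses the boundary of a cell of level `j ≤ r`. -/
lemma kernel_cell
    (hFdisj : ∀ k, k ≤ n → ∀ j j' : I k, j ≠ j' → Disjoint (F k j) (F k j'))
    (hFcover : ∀ k, k ≤ n → (⋃ j : I k, F k j) = Set.univ)
    (href : ∀ j r, j ≤ r → r ≤ n → ∀ l : I r, ∃ i : I j, F r l ⊆ F j i)
    {j r : ℕ} (hjr : j ≤ r) (hr : r ≤ n) (κ : E → Measure E)
    (hD : ∀ (l : I r) (x : E), x ∉ F r l → κ x (F r l) = 0) (i : I j) (x : E) :
    (x ∉ F j i → κ x (F j i) = 0) ∧ (x ∈ F j i → κ x (F j i)ᶜ = 0) := by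
  have h1 : ∀ i : I j, x ∉ F j i → κ x (F j i) = 0 := by
    intro i hx
    rw [cell_eq_biUnion hFdisj hFcover href hjr hr i]
    refine (measure_biUnion_null_iff (Finset.countable_toSet _)).2 fun l hl => ?_
    exact hD l x fun hxl => hx (mem_subCells.1 hl hxl)
  refine ⟨h1 i, fun hx => ?_⟩
  have hsub : (F j i)ᶜ ⊆ ⋃ i' : {i' : I j // i' ≠ i}, F j i' := by
    intro y hy
    have hy' : y ∈ ⋃ i' : I j, F j i' := by rw [hFcover j (hjr.trans hr)]; trivial
    obtain ⟨i', hi'⟩ := Set.mem_iUnion.1 hy'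
    exact Set.mem_iUnion.2 ⟨⟨i', fun h => hy (h ▸ hi')⟩, hi'⟩
  refine measure_mono_null hsub (measure_iUnion_null fun i' => h1 i' fun hx' => ?_)
  exact Set.disjoint_left.1 (hFdisj j (hjr.trans hr) i' i i'.2) hx' hx

end cells

/-! ### Propagators and the iterated bound -/

/-- A Markov kernel that leaves `ν` invariant and does not cross the boundary of `S` preserves
integrals over `S`. -/
lemma setIntegral_kernel (ν : Measure E) [IsProbabilityMeasure ν] (κ : E → Measure E)
    (hκprob : ∀ x, IsProbabilityMeasure (κ x)) (hκmeas : Measurable κ) (hinv : ν.bind κ = ν)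
    {S : Set E} (hS : MeasurableSet S)
    (hD : ∀ x, (x ∉ S → κ x S = 0) ∧ (x ∈ S → κ x Sᶜ = 0))
    {f : E → ℝ} (hf : Measurable f) (hb : ∃ C : ℝ, ∀ x, |f x| ≤ C) :
    ∫ x in S, (∫ y, f y ∂(κ x)) ∂ν = ∫ x in S, f x ∂ν := by
  rw [← integral_indicator hS, ← integral_indicator hS]
  have h1 : S.indicator (fun x => ∫ y, f y ∂(κ x)) = fun x => ∫ y, S.indicator f y ∂(κ x) := by
    ext x
    rw [integral_indicator hS]
    by_cases hx : x ∈ S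
    · rw [Set.indicator_of_mem hx, ← integral_add_compl hS (integrable_of_bdd (κ x) hf hb),
        Measure.restrict_eq_zero.2 ((hD x).2 hx)]
      simp
    · rw [Set.indicator_of_notMem hx, Measure.restrict_eq_zero.2 ((hD x).1 hx)]
      simp
  have h2 : Integrable (S.indicator f) (ν.bind κ) := by
    rw [hinv]; exact (integrable_of_bdd ν hf hb).indicator hS
  rw [h1]
  conv_rhs => rw [← hinv]
  let η : ProbabilityTheory.Kernel E E := ⟨κ, hκmeas⟩
  let ν' : ProbabilityTheory.Kernel Unit E := ProbabilityTheory.Kernel.const Unit ν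
  exact (ProbabilityTheory.Kernel.integral_comp (κ := ν') (η := η) (a := ()) h2).symm

section propagator
variable {n : ℕ} {μ : ℕ → Measure E} {g : ℕ → E → ℝ} {K : ℕ → E → Measure E}
  {qhat : ℕ → ℕ → (E → ℝ) → E → ℝ}

lemma weighted_meas_bdd (hgmeas : ∀ k, Measurable (g k)) (hgpos : ∀ k x, 0 < g k x)
    (hgbdd : ∀ k, ∃ C : ℝ, ∀ x, g k x ≤ C) (j : ℕ) (c : ℝ) {h : E → ℝ} (hh : Measurable h)
    (hb : ∃ C : ℝ, ∀ x, |h x| ≤ C) :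
    Measurable (fun y => g j y / c * h y) ∧ ∃ C : ℝ, ∀ y, |g j y / c * h y| ≤ C := by
  obtain ⟨C, hC⟩ := hb
  obtain ⟨G, hG⟩ := hgbdd j
  refine ⟨((hgmeas j).div_const c).mul hh, G / |c| * C, fun y => ?_⟩
  rw [abs_mul, abs_div, abs_of_pos (hgpos j y)]
  have hG0 : 0 ≤ G := (hgpos j y).le.trans (hG y)
  have := hG y
  have := hC y
  gcongr

lemma qhat_meas_bdd (hgmeas : ∀ k, Measurable (g k)) (hgpos : ∀ k x, 0 < g k x)
    (hgbdd : ∀ k, ∃ C : ℝ, ∀ x, g k x ≤ C)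
    (hKprob : ∀ k x, IsProbabilityMeasure (K k x)) (hKmeas : ∀ k, Measurable (K k))
    (hqdiag : ∀ k f, qhat k k f = f)
    (hqstep : ∀ j k, j < k → k ≤ n → ∀ (f : E → ℝ) (x : E),
      qhat j k f x = ∫ y, (g j y / (∫ z, g j z ∂(μ j))) * qhat (j+1) k f y ∂(K j x))
    {k : ℕ} (hk : k ≤ n) {f : E → ℝ} (hf : Measurable f) (hb : ∃ C : ℝ, ∀ x, |f x| ≤ C)
    {j : ℕ} (hj : j ≤ k) :
    Measurable (qhat j k f) ∧ ∃ C : ℝ, ∀ x, |qhat j k f x| ≤ C := by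
  induction hj using Nat.decreasingInduction with
  | self => rw [hqdiag]; exact ⟨hf, hb⟩
  | of_succ j hj ih =>
    obtain ⟨hm, C, hC⟩ := weighted_meas_bdd hgmeas hgpos hgbdd j (∫ z, g j z ∂(μ j)) ih.1 ih.2
    rw [show qhat j k f = _ from funext (hqstep j k hj hk f)]
    constructor
    · let κ : ProbabilityTheory.Kernel E E := ⟨K j, hKmeas j⟩
      have : ProbabilityTheory.IsMarkovKernel κ := ⟨hKprob j⟩
      exact (StronglyMeasurable.integral_kernel (κ := κ) hm.stronglyMeasurable).measurable
    · refine ⟨C, fun x => ?_⟩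
      have := hKprob j x
      have := norm_integral_le_of_norm_le_const (μ := K j x)
        (f := fun y => g j y / (∫ z, g j z ∂(μ j)) * qhat (j+1) k f y) (C := C)
        (Filter.Eventually.of_forall hC)
      simpa only [probReal_univ, mul_one, Real.norm_eq_abs] using this

/-- The propagators transport integrals over a cell of level `j` unchanged, as long as the levels
involved are at least `j`. -/
lemma setIntegral_qhat
    (hμprob : ∀ k, k ≤ n → IsProbabilityMeasure (μ k))
    (hgmeas : ∀ k, Measurable (g k)) (hgpos : ∀ k x, 0 < g k x)
    (hgbdd : ∀ k, ∃ C : ℝ, ∀ x, g k x ≤ C)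
    (hgdens : ∀ k, k < n → ∀ f : E → ℝ, Measurable f → (∃ C : ℝ, ∀ x, |f x| ≤ C) →
      (∫ x, f x ∂(μ (k+1))) = (∫ x, f x * g k x ∂(μ k)) / (∫ x, g k x ∂(μ k)))
    (hKprob : ∀ k x, IsProbabilityMeasure (K k x)) (hKmeas : ∀ k, Measurable (K k))
    (hKinv : ∀ k, k ≤ n → (μ k).bind (K k) = μ k)
    {F : ∀ k, I k → Set E}
    (hFmeas : ∀ k j, MeasurableSet (F k j))
    (hFdisj : ∀ k, k ≤ n → ∀ j j' : I k, j ≠ j' → Disjoint (F k j) (F k j'))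
    (hFcover : ∀ k, k ≤ n → (⋃ j : I k, F k j) = Set.univ)
    (href : ∀ j r, j ≤ r → r ≤ n → ∀ l : I r, ∃ i : I j, F r l ⊆ F j i)
    (hD : ∀ k, 1 ≤ k → k ≤ n → ∀ (j : I k) (x : E), x ∉ F k j → K k x (F k j) = 0)
    (hqdiag : ∀ k f, qhat k k f = f)
    (hqstep : ∀ j k, j < k → k ≤ n → ∀ (f : E → ℝ) (x : E),
      qhat j k f x = ∫ y, (g j y / (∫ z, g j z ∂(μ j))) * qhat (j+1) k f y ∂(K j x))
    {k : ℕ} (hk : k ≤ n) {f : E → ℝ} (hf : Measurable f) (hb : ∃ C : ℝ, ∀ x, |f x| ≤ C)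
    {j : ℕ} (hj1 : 1 ≤ j) (i : I j) {r : ℕ} (hjr : j ≤ r) (hr : r ≤ k) :
    ∫ x in F j i, qhat r k f x ∂(μ r) = ∫ x in F j i, f x ∂(μ k) := by
  induction hr using Nat.decreasingInduction with
  | self => rw [hqdiag]
  | of_succ r hr ih =>
    have := hμprob r (by omega)
    obtain ⟨hqm, hqb⟩ :=
      qhat_meas_bdd hgmeas hgpos hgbdd hKprob hKmeas hqdiag hqstep hk hf hb (j := r + 1) hr
    obtain ⟨hm, hC⟩ := weighted_meas_bdd hgmeas hgpos hgbdd r (∫ z, g r z ∂(μ r)) hqm hqb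
    rw [← ih (by omega), show qhat r k f = _ from funext (hqstep r k hr hk f),
      setIntegral_kernel (μ r) (K r) (hKprob r) (hKmeas r) (hKinv r (by omega)) (hFmeas j i)
        (kernel_cell hFdisj hFcover href hjr (by omega) (K r) (hD r (by omega) (by omega)) i) hm hC,
      ← integral_indicator (hFmeas j i), ← integral_indicator (hFmeas j i)]
    rw [hgdens r (by omega) _ (hqm.indicator (hFmeas j i)), ← integral_div]
    · congr 1
      ext x
      by_cases hx : x ∈ F j i
      · simp only [Set.indicator_of_mem hx]; ring
      · simp only [Set.indicator_of_notMem hx]; simp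
    · obtain ⟨C, hC⟩ := hqb
      refine ⟨C, fun x => ?_⟩
      by_cases hx : x ∈ F j i
      · simpa only [Set.indicator_of_mem hx] using hC x
      · simp only [Set.indicator_of_notMem hx, abs_zero]
        exact (abs_nonneg _).trans (hC x)

/-- The iterated bound on a cell `i` of level `j`, with arbitrary upper bounds `B`, `D`, `M` over
the sub-cells of level `k` in place of maxima, together with the bound of the mass quotient
`μ_k(F_i)/μ_j(F_i)` by `M`. Unlike the target, it also makes sense for `j = k`. -/
lemma key_bound
    (hμprob : ∀ k, k ≤ n → IsProbabilityMeasure (μ k))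
    (hgmeas : ∀ k, Measurable (g k)) (hgpos : ∀ k x, 0 < g k x)
    (hgbdd : ∀ k, ∃ C : ℝ, ∀ x, g k x ≤ C)
    (hgdens : ∀ k, k < n → ∀ f : E → ℝ, Measurable f → (∃ C : ℝ, ∀ x, |f x| ≤ C) →
      (∫ x, f x ∂(μ (k+1))) = (∫ x, f x * g k x ∂(μ k)) / (∫ x, g k x ∂(μ k)))
    (hKprob : ∀ k x, IsProbabilityMeasure (K k x)) (hKmeas : ∀ k, Measurable (K k))
    (hKinv : ∀ k, k ≤ n → (μ k).bind (K k) = μ k)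
    {F : ∀ k, I k → Set E}
    (hFmeas : ∀ k j, MeasurableSet (F k j))
    (hpos : ∀ j k, j ≤ n → k ≤ n → ∀ i : I j, 0 < (μ k).real (F j i))
    (hFdisj : ∀ k, k ≤ n → ∀ j j' : I k, j ≠ j' → Disjoint (F k j) (F k j'))
    (hFcover : ∀ k, k ≤ n → (⋃ j : I k, F k j) = Set.univ)
    (href : ∀ j r, j ≤ r → r ≤ n → ∀ l : I r, ∃ i : I j, F r l ⊆ F j i)
    {p : ∀ j k : ℕ, I k → I j}
    (hpiff : ∀ j k, j < k → k ≤ n → ∀ (l : I k) (i : I j), F k l ⊆ F j i ↔ p j k l = i)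
    (hD : ∀ k, 1 ≤ k → k ≤ n → ∀ (j : I k) (x : E), x ∉ F k j → K k x (F k j) = 0)
    (hqdiag : ∀ k f, qhat k k f = f)
    (hqstep : ∀ j k, j < k → k ≤ n → ∀ (f : E → ℝ) (x : E),
      qhat j k f x = ∫ y, (g j y / (∫ z, g j z ∂(μ j))) * qhat (j+1) k f y ∂(K j x))
    {α β : ℝ} (hα : 0 < α) (hβ0 : 0 ≤ β)
    (hM : ∀ k, 1 ≤ k → k < n → ∀ (i : I k) (f : E → ℝ),
      Measurable f → (∃ C : ℝ, ∀ x, |f x| ≤ C) →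
      (locNorm (muLoc (μ k) (F k i)) 2 (qhat k (k+1) f))^2
        ≤ (mRatio μ F k i)^2 *
            (α * (locNorm (muLoc (μ (k+1)) (F k i)) 2 f)^2
              + β * (∫ x, f x ∂(muLoc (μ (k+1)) (F k i)))^2))
    {k : ℕ} (hk : k ≤ n) {f : E → ℝ} (hf : Measurable f) (hb : ∃ C : ℝ, ∀ x, |f x| ≤ C)
    {j : ℕ} (hj : j ≤ k) (hj1 : 1 ≤ j) (i : I j) (B D M : ℝ) (hB0 : 0 ≤ B) (hD0 : 0 ≤ D)
    (hB : ∀ l : I k, F k l ⊆ F j i → (locNorm (muLoc (μ k) (F k l)) 2 f) ^ 2 ≤ B)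
    (hDl : ∀ l : I k, F k l ⊆ F j i → |∫ x, f x ∂(muLoc (μ k) (F k l))| ≤ D)
    (hMl : ∀ l : I k, F k l ⊆ F j i → Mprod μ F p j k l ≤ M) :
    (locNorm (muLoc (μ j) (F j i)) 2 (qhat j k f)) ^ 2
        ≤ M ^ 2 * (α ^ (k - j) * B + β * (∑ r ∈ Finset.range (k - j), α ^ r) * D ^ 2) ∧
      (μ k).real (F j i) ≤ M * (μ j).real (F j i) := by
  induction hj using Nat.decreasingInduction generalizing M with
  | self =>
    have h1 : 1 ≤ M := by simpa [Mprod] using hMl i subset_rfl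
    have h2 := hB i subset_rfl
    rw [hqdiag]
    constructor
    · simp only [Nat.sub_self, pow_zero, one_mul, Finset.range_zero, Finset.sum_empty, mul_zero,
        zero_mul, add_zero]
      exact h2.trans (le_mul_of_one_le_left hB0 (one_le_pow₀ h1))
    · exact le_mul_of_one_le_left measureReal_nonneg h1
  | of_succ j hj ih =>
    have hjn : j + 1 ≤ n := by omega
    have := hμprob (j + 1) hjn
    have := hμprob k hk
    set m := mRatio μ F j i with hm
    have hmpos : 0 < m := div_pos (hpos j (j+1) (by omega) hjn i) (hpos j j (by omega) (by omega) i)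
    -- the bound left for the branches from level `j + 1` on
    set M' := M / m with hM'
    have hMM' : M = m * M' := by rw [hM']; field_simp
    have hstep : ∀ i' : I (j+1), F (j+1) i' ⊆ F j i → _ := fun i' hi' =>
      ih (by omega) i' M' (fun l hl => hB l (hl.trans hi')) (fun l hl => hDl l (hl.trans hi'))
        (fun l hl => by
          have h1 := hMl l (hl.trans hi')
          have h2 : p j k l = i := (hpiff j k hj hk l i).1 (hl.trans hi')
          rw [Mprod, Finset.prod_eq_prod_Ico_succ_bot hj, h2] at h1
          rw [hM', le_div_iff₀' hmpos]
          exact h1)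
    obtain ⟨hqm, hqb⟩ :=
      qhat_meas_bdd hgmeas hgpos hgbdd hKprob hKmeas hqdiag hqstep hk hf hb (j := j + 1) hj
    have hcomp : qhat j k f = qhat j (j+1) (qhat (j+1) k f) := by
      ext x
      rw [hqstep j k hj hk, hqstep j (j+1) (by omega) hjn, hqdiag]
    have hmass' : (μ k).real (F j i) ≤ M' * (μ (j+1)).real (F j i) := by
      rw [real_cell hFmeas hFdisj hFcover href (Nat.le_succ j) hjn i (μ k),
        real_cell hFmeas hFdisj hFcover href (Nat.le_succ j) hjn i (μ (j+1)), Finset.mul_sum]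
      exact Finset.sum_le_sum fun i' hi' => (hstep i' (mem_subCells.1 hi')).2
    have hposj := hpos j (j+1) (by omega) hjn i
    set c := M' ^ 2 * (α ^ (k - (j+1)) * B + β * (∑ r ∈ Finset.range (k - (j+1)), α ^ r) * D ^ 2)
      with hc
    have hnorm : (locNorm (muLoc (μ (j+1)) (F j i)) 2 (qhat (j+1) k f)) ^ 2 ≤ c := by
      rw [locNorm_sq, integral_muLoc, div_le_iff₀ hposj]
      refine setIntegral_cell_le hFmeas hFdisj hFcover href (Nat.le_succ j) hjn i (μ (j+1))
        (hpos (j+1) (j+1) hjn hjn) (integrable_of_bdd _ (hqm.pow_const 2) (sq_bdd hqb)) ?_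
      intro i' hi'
      rw [← locNorm_sq]
      exact (hstep i' hi').1
    have hmean : (∫ x, qhat (j+1) k f x ∂(muLoc (μ (j+1)) (F j i))) ^ 2 ≤ (M' * D) ^ 2 := by
      rw [integral_muLoc, setIntegral_qhat hμprob hgmeas hgpos hgbdd hgdens hKprob hKmeas hKinv
        hFmeas hFdisj hFcover href hD hqdiag hqstep hk hf hb hj1 i (Nat.le_succ j) hj]
      have hint := integrable_of_bdd (μ k) hf hb
      have hup := setIntegral_cell_le hFmeas hFdisj hFcover href hj.le hk i (μ k)
        (hpos k k hk hk) hint (c := D) (fun l hl => (abs_le.1 (hDl l hl)).2)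
      have hlo := setIntegral_cell_le hFmeas hFdisj hFcover href hj.le hk i (μ k)
        (hpos k k hk hk) hint.neg (c := D) (fun l hl => by
          simp only [Pi.neg_apply]
          rw [integral_neg]; linarith [(abs_le.1 (hDl l hl)).1])
      simp only [Pi.neg_apply] at hlo
      rw [integral_neg] at hlo
      have hDM : D * (μ k).real (F j i) ≤ M' * D * (μ (j+1)).real (F j i) := by
        calc D * (μ k).real (F j i) ≤ D * (M' * (μ (j+1)).real (F j i)) := by gcongr
          _ = _ := by ring
      refine sq_le_sq' ?_ ?_
      · rw [le_div_iff₀ hposj]; linarith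
      · rw [div_le_iff₀ hposj]; linarith
    constructor
    · rw [hcomp]
      refine (hM j hj1 (by omega) i _ hqm hqb).trans ?_
      have hkj : k - j = (k - (j+1)) + 1 := by omega
      have hgeom : (∑ r ∈ Finset.range (k - j), α ^ r)
          = α * (∑ r ∈ Finset.range (k - (j+1)), α ^ r) + 1 := by
        rw [hkj, geom_sum_succ]
      calc _ ≤ m ^ 2 * (α * c + β * (M' * D) ^ 2) := by gcongr
        _ = _ := by rw [hgeom, hkj, hc, hMM', pow_succ]; ring
    · calc _ ≤ M' * (μ (j+1)).real (F j i) := hmass'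
        _ = M' * (m * (μ j).real (F j i)) := by
          congr 1
          have := (hpos j j (by omega) (by omega) i).ne'
          rw [hm, mRatio]
          exact (div_mul_cancel₀ _ this).symm
        _ = _ := by rw [hMM']; ring

end propagator

/- Lemma 4.7 of the paper: iterated local L₂-bounds for q̂_{j,k} under the
   local mixing assumption with α < 1. -/
theorem stmt_14
    (n : ℕ) (μ : ℕ → Measure E)
    (hμprob : ∀ k, k ≤ n → IsProbabilityMeasure (μ k))
    (hμac : ∀ j k, j ≤ n → k ≤ n → μ j ≪ μ k)
    (g : ℕ → E → ℝ)
    (hgmeas : ∀ k, Measurable (g k))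
    (hgpos : ∀ k x, 0 < g k x)
    (hgbdd : ∀ k, ∃ C : ℝ, ∀ x, g k x ≤ C)
    (hgdens : ∀ k, k < n → ∀ f : E → ℝ, Measurable f → (∃ C : ℝ, ∀ x, |f x| ≤ C) →
      (∫ x, f x ∂(μ (k+1))) = (∫ x, f x * g k x ∂(μ k)) / (∫ x, g k x ∂(μ k)))
    (K : ℕ → E → Measure E)
    (hKprob : ∀ k x, IsProbabilityMeasure (K k x))
    (hKmeas : ∀ k (A : Set E), MeasurableSet A → Measurable fun x => K k x A)
    (hKinv : ∀ k, k ≤ n → (μ k).bind (K k) = μ k)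
    (F : ∀ k, I k → Set E)
    (hFmeas : ∀ k j, MeasurableSet (F k j))
    (hFpos : ∀ k, k ≤ n → ∀ j, 0 < μ 0 (F k j))
    (hFdisj : ∀ k, k ≤ n → ∀ j j' : I k, j ≠ j' → Disjoint (F k j) (F k j'))
    (hFcover : ∀ k, k ≤ n → (⋃ j : I k, F k j) = Set.univ)
    (p : ∀ j k : ℕ, I k → I j)
    (hp : ∀ j k, j < k → k ≤ n → ∀ l : I k, F k l ⊆ F j (p j k l))
    (hsne : ∀ (j k : ℕ) (_ : j < k) (_ : k ≤ n) (i : I j), (succSet p j k i).Nonempty)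
    (hD : ∀ k, 1 ≤ k → k ≤ n → ∀ (j : I k) (x : E), x ∉ F k j → K k x (F k j) = 0)
    (qhat : ℕ → ℕ → (E → ℝ) → E → ℝ)
    (hqdiag : ∀ k f, qhat k k f = f)
    (hqstep : ∀ j k, j < k → k ≤ n → ∀ (f : E → ℝ) (x : E),
      qhat j k f x = ∫ y, (g j y / (∫ z, g j z ∂(μ j))) * qhat (j+1) k f y ∂(K j x))
    (α β : ℝ) (hα : 0 < α) (hβ0 : 0 ≤ β) (hβ1 : β ≤ 1)
    (hM : ∀ k, 1 ≤ k → k < n → ∀ (i : I k) (f : E → ℝ),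
      Measurable f → (∃ C : ℝ, ∀ x, |f x| ≤ C) →
      (locNorm (muLoc (μ k) (F k i)) 2 (qhat k (k+1) f))^2
        ≤ (mRatio μ F k i)^2 *
            (α * (locNorm (muLoc (μ (k+1)) (F k i)) 2 f)^2
              + β * (∫ x, f x ∂(muLoc (μ (k+1)) (F k i)))^2))
    (hα1 : α < 1) :
    ∀ (j k : ℕ) (hjk : j < k) (hkn : k ≤ n), 1 ≤ j → ∀ f : E → ℝ, Measurable f → (∃ C : ℝ, ∀ x, |f x| ≤ C) →
      (∀ i : I j,
        (locNorm (muLoc (μ j) (F j i)) 2 (qhat j k f))^2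
          ≤ ((succSet p j k i).sup' (hsne j k hjk hkn i) (Mprod μ F p j k))^2
            * (α^(k-j) * ((succSet p j k i).sup' (hsne j k hjk hkn i) fun l =>
                  (locNorm (muLoc (μ k) (F k l)) 2 f)^2)
               + β/(1-α) * ((succSet p j k i).sup' (hsne j k hjk hkn i) fun l =>
                  (∫ x, f x ∂(muLoc (μ k) (F k l)))^2)))
      ∧ (∀ i : I j,
        locNorm (muLoc (μ j) (F j i)) 2 (qhat j k f)
          ≤ ((succSet p j k i).sup' (hsne j k hjk hkn i) (Mprod μ F p j k))
            * (1-α) ^ (-(1/2) : ℝ)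
            * ((succSet p j k i).sup' (hsne j k hjk hkn i) fun l =>
                locNorm (muLoc (μ k) (F k l)) 2 f))
      ∧ maxNorm μ F j 2 (qhat j k f)
          ≤ (Finset.univ.sup' Finset.univ_nonempty fun i : I j =>
              (succSet p j k i).sup' (hsne j k hjk hkn i) (Mprod μ F p j k))
            * (1-α) ^ (-(1/2) : ℝ) * maxNorm μ F k 2 f := by
  intro j k hjk hkn hj1 f hf hb
  have hpos : ∀ j k, j ≤ n → k ≤ n → ∀ i : I j, 0 < (μ k).real (F j i) := by
    intro j k hj hk i
    have := hμprob k hk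
    refine ENNReal.toReal_pos (fun h0 => (hFpos j hj i).ne' ?_) (measure_ne_top _ _)
    exact hμac 0 k (Nat.zero_le _) hk h0
  have href : ∀ j r, j ≤ r → r ≤ n → ∀ l : I r, ∃ i : I j, F r l ⊆ F j i := by
    intro j r hjr hr l
    rcases hjr.eq_or_lt with rfl | hlt
    · exact ⟨l, subset_rfl⟩
    · exact ⟨_, hp j r hlt hr l⟩
  have hpiff : ∀ j k, j < k → k ≤ n → ∀ (l : I k) (i : I j), F k l ⊆ F j i ↔ p j k l = i := by
    intro j k hjk hk l i
    refine ⟨fun h => ?_, fun h => h ▸ hp j k hjk hk l⟩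
    by_contra hne
    obtain ⟨x, hx⟩ := nonempty_of_measure_ne_zero (hFpos k hk l).ne'
    exact Set.disjoint_left.1 (hFdisj j (by omega) _ i hne) (hp j k hjk hk l hx) (h hx)
  have hKmeas' : ∀ k, Measurable (K k) := fun k => Measure.measurable_of_measurable_coe _ (hKmeas k)
  have hprobk := hμprob k hkn
  have hmem : ∀ (i : I j) (l : I k), F k l ⊆ F j i → l ∈ succSet p j k i := by
    intro i l hl
    simpa [succSet] using (hpiff j k hjk hkn l i).1 hl
  have hkey : ∀ (i : I j) (B D : ℝ), 0 ≤ B → 0 ≤ D →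
      (∀ l ∈ succSet p j k i, (locNorm (muLoc (μ k) (F k l)) 2 f) ^ 2 ≤ B) →
      (∀ l ∈ succSet p j k i, |∫ x, f x ∂(muLoc (μ k) (F k l))| ≤ D) → _ :=
    fun i B D hB0 hD0 hB hDl =>
      (key_bound hμprob hgmeas hgpos hgbdd hgdens hKprob hKmeas' hKinv hFmeas hpos hFdisj hFcover
        href hpiff hD hqdiag hqstep hα hβ0 hM hkn hf hb hjk.le hj1 i B D
        ((succSet p j k i).sup' (hsne j k hjk hkn i) (Mprod μ F p j k)) hB0 hD0
        (fun l hl => hB l (hmem i l hl)) (fun l hl => hDl l (hmem i l hl))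
        (fun l hl => Finset.le_sup' _ (hmem i l hl))).1
  have hMnn : ∀ i : I j, 0 ≤ (succSet p j k i).sup' (hsne j k hjk hkn i) (Mprod μ F p j k) := by
    intro i
    obtain ⟨l, hl⟩ := hsne j k hjk hkn i
    exact (Finset.prod_nonneg fun r _ => div_nonneg ENNReal.toReal_nonneg
      ENNReal.toReal_nonneg).trans (Finset.le_sup' (Mprod μ F p j k) hl)
  have h1α : 0 < 1 - α := by linarith
  have hgeom : ∀ N : ℕ, (∑ r ∈ Finset.range N, α ^ r) ≤ 1 / (1 - α) := by
    intro N
    rw [le_div_iff₀ h1α, geom_sum_mul_neg]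
    linarith [pow_pos hα N]
  have hb2 : ∀ i : I j,
      locNorm (muLoc (μ j) (F j i)) 2 (qhat j k f)
        ≤ ((succSet p j k i).sup' (hsne j k hjk hkn i) (Mprod μ F p j k))
          * (1-α) ^ (-(1/2) : ℝ)
          * ((succSet p j k i).sup' (hsne j k hjk hkn i) fun l =>
              locNorm (muLoc (μ k) (F k l)) 2 f) := by
    intro i
    set S := (succSet p j k i).sup' (hsne j k hjk hkn i) fun l =>
      locNorm (muLoc (μ k) (F k l)) 2 f with hS
    have hle : ∀ l ∈ succSet p j k i, locNorm (muLoc (μ k) (F k l)) 2 f ≤ S := fun l hl =>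
      Finset.le_sup' (fun l => locNorm (muLoc (μ k) (F k l)) 2 f) hl
    have hS0 : 0 ≤ S := by
      obtain ⟨l, hl⟩ := hsne j k hjk hkn i
      exact (locNorm_nonneg _ _).trans (hle l hl)
    have h := hkey i (S ^ 2) S (sq_nonneg _) hS0
      (fun l hl => pow_le_pow_left₀ (locNorm_nonneg _ _) (hle l hl) 2)
      (fun l hl => (abs_integral_muLoc_le (μ k)
        (fun h0 => (hpos k k hkn hkn l).ne' (by simp [Measure.real, h0])) hf hb).trans (hle l hl))
    have hMi := hMnn i
    set M := (succSet p j k i).sup' (hsne j k hjk hkn i) (Mprod μ F p j k)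
    have hr0 : 0 ≤ (1-α) ^ (-(1/2) : ℝ) := Real.rpow_nonneg h1α.le _
    refine le_of_pow_le_pow_left₀ two_ne_zero (mul_nonneg (mul_nonneg hMi hr0) hS0) ?_
    refine h.trans ?_
    have hsq : ((1-α) ^ (-(1/2) : ℝ)) ^ 2 = 1 / (1 - α) := by
      rw [← Real.rpow_natCast, ← Real.rpow_mul h1α.le]
      norm_num
      rw [Real.rpow_neg_one]
    rw [mul_pow, mul_pow, hsq, mul_assoc (M ^ 2)]
    have hsum0 : 0 ≤ ∑ r ∈ Finset.range (k - j), α ^ r :=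
      Finset.sum_nonneg fun r _ => (pow_pos hα r).le
    have hlast := hgeom (k - j + 1)
    -- the term `α ^ (k - j)` is the next term of the geometric sum
    rw [Finset.sum_range_succ] at hlast
    have : β * (∑ r ∈ Finset.range (k - j), α ^ r) ≤ ∑ r ∈ Finset.range (k - j), α ^ r :=
      mul_le_of_le_one_left hsum0 hβ1
    rw [← add_mul]
    exact mul_le_mul_of_nonneg_left (mul_le_mul_of_nonneg_right (by linarith) (sq_nonneg S))
      (sq_nonneg M)
  refine ⟨fun i => ?_, hb2, ?_⟩
  · set B := (succSet p j k i).sup' (hsne j k hjk hkn i) fun l =>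
      (locNorm (muLoc (μ k) (F k l)) 2 f)^2
    set C := (succSet p j k i).sup' (hsne j k hjk hkn i) fun l =>
      (∫ x, f x ∂(muLoc (μ k) (F k l)))^2
    have hB : ∀ l ∈ succSet p j k i, (locNorm (muLoc (μ k) (F k l)) 2 f) ^ 2 ≤ B := fun l hl =>
      Finset.le_sup' (fun l => (locNorm (muLoc (μ k) (F k l)) 2 f)^2) hl
    have hC : ∀ l ∈ succSet p j k i, (∫ x, f x ∂(muLoc (μ k) (F k l))) ^ 2 ≤ C := fun l hl =>
      Finset.le_sup' (fun l => (∫ x, f x ∂(muLoc (μ k) (F k l)))^2) hl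
    obtain ⟨l₀, hl₀⟩ := hsne j k hjk hkn i
    have hB0 : 0 ≤ B := (sq_nonneg _).trans (hB l₀ hl₀)
    have hC0 : 0 ≤ C := (sq_nonneg _).trans (hC l₀ hl₀)
    refine (hkey i B (Real.sqrt C) hB0 (Real.sqrt_nonneg _) hB
      (fun l hl => Real.abs_le_sqrt (hC l hl))).trans ?_
    rw [Real.sq_sqrt hC0]
    gcongr
    rw [div_eq_mul_one_div]
    gcongr
    exact hgeom _
  · unfold maxNorm
    refine Finset.sup'_le _ _ fun i _ => (hb2 i).trans ?_
    have hr0 : 0 ≤ (1-α) ^ (-(1/2) : ℝ) := Real.rpow_nonneg h1α.le _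
    have hA : (succSet p j k i).sup' (hsne j k hjk hkn i) (Mprod μ F p j k) ≤
        Finset.univ.sup' Finset.univ_nonempty fun i : I j =>
          (succSet p j k i).sup' (hsne j k hjk hkn i) (Mprod μ F p j k) :=
      Finset.le_sup' (fun i : I j =>
        (succSet p j k i).sup' (hsne j k hjk hkn i) (Mprod μ F p j k)) (Finset.mem_univ i)
    have hA0 := (hMnn i).trans hA
    refine mul_le_mul (mul_le_mul_of_nonneg_right hA hr0) ?_ ?_ (mul_nonneg hA0 hr0)
    · exact Finset.sup'_mono _ (Finset.subset_univ _) _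
    · obtain ⟨l, hl⟩ := hsne j k hjk hkn i
      exact (locNorm_nonneg _ _).trans
        (Finset.le_sup' (fun l => locNorm (muLoc (μ k) (F k l)) 2 f) hl)
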